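/- arXiv:2011.04358 — 2 statements merged into one kernel-verified Lean document; each statement's English description precedes it below -/
import Mathlib

section
/- Let n ≥ 2 and let f be the symmetric quartic form on ℝⁿ determined by real coefficients a, b, c, d, e. Let Z^f be the set of pairs (r,s) of positive integers consisting of (k,1) and (1,k) for all k ∈ {1,…,n−1}, together with the pairs (k,n−k) for all k ∈ {1,…,n−1} in case a > 0 and b < 0. For a pair (r,s), define α = 4a + (3b+4c)r + 2dr², β = 4a + 3b(r+s) + 4drs, γ = 4a + (3b+4c)s + 2ds², Δ = β² − 4αγ, A = r[a + (b+c)r + dr² + er³], B = rs(b + 2dr + 4er²), C = rs[2c + d(r+s) + 6ers], D = rs(b + 2ds + 4es²), E = s[a + (b+c)s + ds² + es³], P = A(β⁴ − 4β²αγ + 2α²γ²) − Bβα(β² − 3αγ) + Cα²(β² − 2αγ) − Dβα³ + 2Eα⁴, Q = −Aβ(β² − 2αγ) + Bα(β² − αγ) − Cβα² + Dα³, and (when α ≠ 0) R = (P² − Q²Δ)/(4α⁴). Say that condition (★) holds for (r,s) if both: [(α ≤ 0 and β ≤ 0) or (β ≥ 0 and γ ≥ 0) or (P ≥ 0 and Q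 ≥ 0) or (R ≥ 0 and P ≥ 0) or (R ≤ 0 and Q ≥ 0)] and [(α ≥ 0 and β ≥ 0) or (β ≤ 0 and γ ≤ 0) or (P ≥ 0 and Q ≤ 0) or (R ≥ 0 and P ≥ 0) or (R ≤ 0 and Q ≤ 0)]. Then f(x) ≥ 0 for every x ∈ ℝⁿ with all coordinates nonnegative if and only if both: (i) f(1_k, 0_{n−k}) ≥ 0 for every k ∈ {1,…,n}; and (ii) condition (★) holds for every (r,s) ∈ Z^f such that Δ ≥ 0 and α ≠ 0. -/
open Finset

/-- The `k`-th power sum of `x ∈ ℝⁿ`. -/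
noncomputable def powSum (n : ℕ) (k : ℕ) (x : Fin n → ℝ) : ℝ := ∑ i, x i ^ k

/-- The symmetric quartic form with coefficients `a, b, c, d, e`. -/
noncomputable def quarticF (n : ℕ) (a b c d e : ℝ) (x : Fin n → ℝ) : ℝ :=
  a * powSum n 4 x + b * powSum n 3 x * powSum n 1 x + c * (powSum n 2 x) ^ 2
    + d * powSum n 2 x * (powSum n 1 x) ^ 2 + e * (powSum n 1 x) ^ 4

/-- The point `(1_k, 0_{n−k}) ∈ ℝⁿ`. -/
noncomputable def onesPt (n k : ℕ) : Fin n → ℝ := fun i => if (i : ℕ) < k then 1 else 0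

/-- The set `Z^f` of index pairs: `(k,1)` and `(1,k)` for `1 ≤ k ≤ n−1`, together with
`(k, n−k)` for `1 ≤ k ≤ n−1` in case `a > 0 > b`. -/
def Zf (n : ℕ) (a b : ℝ) : Set (ℕ × ℕ) :=
  {p | ∃ k : ℕ, 1 ≤ k ∧ k ≤ n - 1 ∧ (p = (k, 1) ∨ p = (1, k))} ∪
  {p | a > 0 ∧ b < 0 ∧ ∃ k : ℕ, 1 ≤ k ∧ k ≤ n - 1 ∧ p = (k, n - k)}

noncomputable def cα (a b c d : ℝ) (r : ℕ) : ℝ :=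
  4 * a + (3 * b + 4 * c) * (r : ℝ) + 2 * d * (r : ℝ) ^ 2

noncomputable def cβ (a b d : ℝ) (r s : ℕ) : ℝ :=
  4 * a + 3 * b * ((r : ℝ) + (s : ℝ)) + 4 * d * (r : ℝ) * (s : ℝ)

noncomputable def cγ (a b c d : ℝ) (s : ℕ) : ℝ :=
  4 * a + (3 * b + 4 * c) * (s : ℝ) + 2 * d * (s : ℝ) ^ 2

noncomputable def cΔ (a b c d : ℝ) (r s : ℕ) : ℝ :=
  (cβ a b d r s) ^ 2 - 4 * (cα a b c d r) * (cγ a b c d s)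

noncomputable def cA (a b c d e : ℝ) (r : ℕ) : ℝ :=
  (r : ℝ) * (a + (b + c) * (r : ℝ) + d * (r : ℝ) ^ 2 + e * (r : ℝ) ^ 3)

noncomputable def cB (b d e : ℝ) (r s : ℕ) : ℝ :=
  (r : ℝ) * (s : ℝ) * (b + 2 * d * (r : ℝ) + 4 * e * (r : ℝ) ^ 2)

noncomputable def cC (c d e : ℝ) (r s : ℕ) : ℝ :=
  (r : ℝ) * (s : ℝ) * (2 * c + d * ((r : ℝ) + (s : ℝ)) + 6 * e * (r : ℝ) * (s : ℝ))

noncomputable def cD (b d e : ℝ) (r s : ℕ) : ℝ :=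
  (r : ℝ) * (s : ℝ) * (b + 2 * d * (s : ℝ) + 4 * e * (s : ℝ) ^ 2)

noncomputable def cE (a b c d e : ℝ) (s : ℕ) : ℝ :=
  (s : ℝ) * (a + (b + c) * (s : ℝ) + d * (s : ℝ) ^ 2 + e * (s : ℝ) ^ 3)

noncomputable def cP (a b c d e : ℝ) (r s : ℕ) : ℝ :=
  cA a b c d e r * ((cβ a b d r s) ^ 4
      - 4 * (cβ a b d r s) ^ 2 * (cα a b c d r) * (cγ a b c d s)
      + 2 * (cα a b c d r) ^ 2 * (cγ a b c d s) ^ 2)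
    - cB b d e r s * (cβ a b d r s) * (cα a b c d r)
      * ((cβ a b d r s) ^ 2 - 3 * (cα a b c d r) * (cγ a b c d s))
    + cC c d e r s * (cα a b c d r) ^ 2
      * ((cβ a b d r s) ^ 2 - 2 * (cα a b c d r) * (cγ a b c d s))
    - cD b d e r s * (cβ a b d r s) * (cα a b c d r) ^ 3
    + 2 * cE a b c d e s * (cα a b c d r) ^ 4

noncomputable def cQ (a b c d e : ℝ) (r s : ℕ) : ℝ :=
  -(cA a b c d e r) * (cβ a b d r s)
      * ((cβ a b d r s) ^ 2 - 2 * (cα a b c d r) * (cγ a b c d s))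
    + cB b d e r s * (cα a b c d r)
      * ((cβ a b d r s) ^ 2 - (cα a b c d r) * (cγ a b c d s))
    - cC c d e r s * (cβ a b d r s) * (cα a b c d r) ^ 2
    + cD b d e r s * (cα a b c d r) ^ 3

noncomputable def cR (a b c d e : ℝ) (r s : ℕ) : ℝ :=
  ((cP a b c d e r s) ^ 2 - (cQ a b c d e r s) ^ 2 * cΔ a b c d r s)
    / (4 * (cα a b c d r) ^ 4)

/-- The discriminant condition (★) for the pair `(r, s)`. -/
def starCond (a b c d e : ℝ) (r s : ℕ) : Prop :=
  ((cα a b c d r ≤ 0 ∧ cβ a b d r s ≤ 0) ∨ (0 ≤ cβ a b d r s ∧ 0 ≤ cγ a b c d s) ∨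
    (0 ≤ cP a b c d e r s ∧ 0 ≤ cQ a b c d e r s) ∨
    (0 ≤ cR a b c d e r s ∧ 0 ≤ cP a b c d e r s) ∨
    (cR a b c d e r s ≤ 0 ∧ 0 ≤ cQ a b c d e r s)) ∧
  ((0 ≤ cα a b c d r ∧ 0 ≤ cβ a b d r s) ∨ (cβ a b d r s ≤ 0 ∧ cγ a b c d s ≤ 0) ∨
    (0 ≤ cP a b c d e r s ∧ cQ a b c d e r s ≤ 0) ∨
    (0 ≤ cR a b c d e r s ∧ 0 ≤ cP a b c d e r s) ∨
    (cR a b c d e r s ≤ 0 ∧ cQ a b c d e r s ≤ 0))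


/-! ### Algebraic form of the two-valued restriction -/

/-- Value of the form at `r` copies of `t` and `s` copies of `u`. -/
noncomputable def twoVal (a b c d e : ℝ) (r s : ℕ) (t u : ℝ) : ℝ :=
  cA a b c d e r * t ^ 4 + cB b d e r s * t ^ 3 * u + cC c d e r s * t ^ 2 * u ^ 2
    + cD b d e r s * t * u ^ 3 + cE a b c d e s * u ^ 4

lemma quarticF_of_powSums (n : ℕ) (a b c d e : ℝ) (x : Fin n → ℝ) (r s : ℕ) (t u : ℝ)
    (h : ∀ k, 1 ≤ k → powSum n k x = r * t ^ k + s * u ^ k) :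
    quarticF n a b c d e x = twoVal a b c d e r s t u := by
  unfold quarticF twoVal cA cB cC cD cE
  rw [h 1 le_rfl, h 2 (by norm_num), h 3 (by norm_num), h 4 (by norm_num)]
  ring

lemma card_lt (n m : ℕ) (h : m ≤ n) : ((univ.filter (fun i : Fin n => (i : ℕ) < m)).card : ℝ) = m := by
  rw [Fin.card_filter_val_lt, min_eq_right h]

lemma powSum_twoPt (n r s : ℕ) (h : r + s ≤ n) (t u : ℝ) (k : ℕ) (hk : 1 ≤ k) :
    powSum n k (fun i => if (i : ℕ) < r then t else if (i : ℕ) < r + s then u else 0)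
      = r * t ^ k + s * u ^ k := by
  unfold powSum
  have : ∀ i : Fin n, (if (i : ℕ) < r then t else if (i : ℕ) < r + s then u else 0) ^ k
      = (if (i : ℕ) < r then (t ^ k - u ^ k) else 0) + (if (i : ℕ) < r + s then u ^ k else 0) := by
    intro i
    by_cases h1 : (i : ℕ) < r
    · have h2 : (i : ℕ) < r + s := by omega
      simp [h1, h2]
    · by_cases h2 : (i : ℕ) < r + s
      · simp [h1, h2]
      · simp [h1, h2]; omega
  rw [Finset.sum_congr rfl (fun i _ => this i), Finset.sum_add_distrib, ← Finset.sum_filter,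
    ← Finset.sum_filter, Finset.sum_const, Finset.sum_const, nsmul_eq_mul, nsmul_eq_mul,
    card_lt n r (by omega), card_lt n (r + s) h]
  push_cast
  ring

lemma quarticF_onesPt (n k : ℕ) (h : k ≤ n) (a b c d e : ℝ) :
    quarticF n a b c d e (onesPt n k) = cA a b c d e k := by
  have h0 : onesPt n k = (fun i : Fin n => if (i : ℕ) < k then (1 : ℝ) else if (i : ℕ) < k + 0 then 0 else 0) := by
    funext i
    simp [onesPt]
  rw [h0, quarticF_of_powSums n a b c d e _ k 0 1 0 (fun j hj => powSum_twoPt n k 0 (by omega) 1 0 j hj)]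
  simp [twoVal]

/-! ### The discriminant bracket -/

lemma pq_iff (P Q σ Δ : ℝ) (hσ : 0 ≤ σ) (hΔ : σ ^ 2 = Δ) :
    ((0 ≤ P ∧ 0 ≤ Q) ∨ (0 ≤ P ^ 2 - Q ^ 2 * Δ ∧ 0 ≤ P) ∨ (P ^ 2 - Q ^ 2 * Δ ≤ 0 ∧ 0 ≤ Q))
      ↔ 0 ≤ P + Q * σ := by
  subst hΔ
  have e1 : P ^ 2 - Q ^ 2 * σ ^ 2 = P ^ 2 - (Q * σ) ^ 2 := by ring
  rw [e1]
  constructor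
  · rintro (⟨h1, h2⟩ | ⟨h1, h2⟩ | ⟨h1, h2⟩)
    · positivity
    · have := abs_le_of_sq_le_sq (a := Q * σ) (b := P) (by linarith) h2
      linarith [(abs_le.mp this).1]
    · have := abs_le_of_sq_le_sq (a := P) (b := Q * σ) (by linarith) (by positivity)
      linarith [(abs_le.mp this).1]
  · intro h
    rcases le_or_gt 0 P with hP | hP
    · rcases le_or_gt 0 Q with hQ | hQ
      · exact Or.inl ⟨hP, hQ⟩
      · refine Or.inr (Or.inl ⟨?_, hP⟩)
        have : Q * σ ≤ 0 := mul_nonpos_of_nonpos_of_nonneg hQ.le hσ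
        nlinarith
    · have h1 : 0 < Q * σ := by linarith
      have hQ : 0 < Q := by
        by_contra hc
        have := mul_nonpos_of_nonpos_of_nonneg (not_lt.mp hc) hσ
        linarith
      refine Or.inr (Or.inr ⟨?_, hQ.le⟩)
      nlinarith

lemma root_iff (α β γ σ : ℝ) (hα : α ≠ 0) (hσ : 0 ≤ σ) (hΔ : σ ^ 2 = β ^ 2 - 4 * α * γ) :
    ((α ≤ 0 ∧ β ≤ 0) ∨ (0 ≤ β ∧ 0 ≤ γ)) ↔ (σ - β) / (2 * α) ≤ 0 := by
  rcases lt_or_gt_of_ne hα with h | h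
  · have e : (σ - β) / (2 * α) ≤ 0 ↔ β ≤ σ := by
      rw [div_le_iff_of_neg (by linarith)]
      constructor <;> intro h <;> linarith
    rw [e]
    constructor
    · rintro (⟨_, h2⟩ | ⟨h1, h2⟩)
      · linarith
      · apply le_of_sq_le_sq _ hσ
        nlinarith
    · intro hb
      rcases le_or_gt β 0 with h1 | h1
      · exact Or.inl ⟨h.le, h1⟩
      · refine Or.inr ⟨h1.le, ?_⟩
        by_contra hc
        push Not at hc
        have : 0 < α * γ := mul_pos_of_neg_of_neg h hc
        nlinarith
  · have e : (σ - β) / (2 * α) ≤ 0 ↔ σ ≤ β := by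
      rw [div_le_iff₀ (by linarith)]
      constructor <;> intro h <;> linarith
    rw [e]
    constructor
    · rintro (⟨h1, h2⟩ | ⟨h1, h2⟩)
      · linarith
      · apply le_of_sq_le_sq _ h1
        nlinarith [mul_nonneg h.le h2]
    · intro hb
      refine Or.inr ⟨by linarith, ?_⟩
      by_contra hc
      push Not at hc
      have : α * γ < 0 := mul_neg_of_pos_of_neg h hc
      nlinarith

lemma bracket_iff (α β γ σ P Q R : ℝ) (hα : α ≠ 0) (hσ : 0 ≤ σ)
    (hΔ : σ ^ 2 = β ^ 2 - 4 * α * γ)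
    (hR : R = (P ^ 2 - Q ^ 2 * (β ^ 2 - 4 * α * γ)) / (4 * α ^ 4)) :
    ((α ≤ 0 ∧ β ≤ 0) ∨ (0 ≤ β ∧ 0 ≤ γ) ∨ (0 ≤ P ∧ 0 ≤ Q) ∨ (0 ≤ R ∧ 0 ≤ P) ∨ (R ≤ 0 ∧ 0 ≤ Q))
      ↔ ((σ - β) / (2 * α) ≤ 0 ∨ 0 ≤ P + Q * σ) := by
  rw [← pq_iff P Q σ _ hσ hΔ, ← root_iff α β γ σ hα hσ hΔ]
  have h4 : 0 < 4 * α ^ 4 := by positivity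
  have r1 : 0 ≤ R ↔ 0 ≤ P ^ 2 - Q ^ 2 * (β ^ 2 - 4 * α * γ) := by
    rw [hR, le_div_iff₀ h4, zero_mul]
  have r2 : R ≤ 0 ↔ P ^ 2 - Q ^ 2 * (β ^ 2 - 4 * α * γ) ≤ 0 := by
    rw [hR, div_le_iff₀ h4, zero_mul]
  rw [r1, r2]
  tauto

lemma bracket_iff' (α β γ σ P Q R : ℝ) (hα : α ≠ 0) (hσ : 0 ≤ σ)
    (hΔ : σ ^ 2 = β ^ 2 - 4 * α * γ)
    (hR : R = (P ^ 2 - Q ^ 2 * (β ^ 2 - 4 * α * γ)) / (4 * α ^ 4)) :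
    ((0 ≤ α ∧ 0 ≤ β) ∨ (β ≤ 0 ∧ γ ≤ 0) ∨ (0 ≤ P ∧ Q ≤ 0) ∨ (0 ≤ R ∧ 0 ≤ P) ∨ (R ≤ 0 ∧ Q ≤ 0))
      ↔ ((-σ - β) / (2 * α) ≤ 0 ∨ 0 ≤ P - Q * σ) := by
  have := bracket_iff (-α) (-β) (-γ) σ P (-Q) R (by simpa using hα) hσ (by rw [hΔ]; ring)
    (by rw [hR]; ring)
  have e1 : (σ - -β) / (2 * -α) = (-σ - β) / (2 * α) := by
    rw [← neg_div_neg_eq]; ring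
  have e2 : P + -Q * σ = P - Q * σ := by ring
  rw [e1, e2] at this
  simpa using this

lemma twoVal_root (a b c d e : ℝ) (r s : ℕ) (w : ℝ)
    (h : cα a b c d r * w ^ 2 + cβ a b d r s * w + cγ a b c d s = 0) :
    2 * cα a b c d r ^ 4 * twoVal a b c d e r s w 1
      = cP a b c d e r s + cQ a b c d e r s * (2 * cα a b c d r * w + cβ a b d r s) := by
  unfold twoVal cP cQ
  generalize cα a b c d r = α at *
  generalize cβ a b d r s = β at *
  generalize cγ a b c d s = γ at *
  generalize cA a b c d e r = A
  generalize cB b d e r s = B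
  generalize cC c d e r s = C
  generalize cD b d e r s = D
  generalize cE a b c d e s = E
  have h2 : (α * w) ^ 2 = -β * (α * w) - α * γ := by linear_combination α * h
  have h3 : (α * w) ^ 3 = (β ^ 2 - α * γ) * (α * w) + β * α * γ := by
    linear_combination (α * w - β) * h2
  have h4 : (α * w) ^ 4 = (-β ^ 3 + 2 * α * β * γ) * (α * w) - α * γ * (β ^ 2 - α * γ) := by
    linear_combination α * w * h3 + (β ^ 2 - α * γ) * h2
  linear_combination 2 * A * h4 + 2 * B * α * h3 + 2 * C * α ^ 2 * h2

/-- The condition `(★)` says exactly that the form is nonnegative at the positive roots. -/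
lemma starCond_iff (a b c d e : ℝ) (r s : ℕ) (hΔ : 0 ≤ cΔ a b c d r s) (hα : cα a b c d r ≠ 0) :
    starCond a b c d e r s ↔ ∀ w : ℝ, 0 < w →
      cα a b c d r * w ^ 2 + cβ a b d r s * w + cγ a b c d s = 0 →
      0 ≤ twoVal a b c d e r s w 1 := by
  have hs := Real.sq_sqrt hΔ
  have hσ := Real.sqrt_nonneg (cΔ a b c d r s)
  set σ := √(cΔ a b c d r s)
  have hs' : σ ^ 2 = cβ a b d r s ^ 2 - 4 * cα a b c d r * cγ a b c d s := hs
  unfold starCond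
  rw [bracket_iff _ _ _ σ _ _ (cR a b c d e r s) hα hσ hs' rfl,
    bracket_iff' _ _ _ σ _ _ (cR a b c d e r s) hα hσ hs' rfl]
  have key := twoVal_root a b c d e r s
  have hpos : 0 < 2 * cα a b c d r ^ 4 := by positivity
  generalize cα a b c d r = α at *
  generalize cβ a b d r s = β at *
  generalize cγ a b c d s = γ at *
  have w1 : ∀ τ : ℝ, τ ^ 2 = σ ^ 2 →
      α * ((τ - β) / (2 * α)) ^ 2 + β * ((τ - β) / (2 * α)) + γ = 0 := by
    intro τ hτ
    field_simp
    linear_combination hτ + hs'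
  have w2 : ∀ τ : ℝ, 2 * α * ((τ - β) / (2 * α)) + β = τ := by
    intro τ; field_simp; ring
  constructor
  · rintro ⟨h1, h2⟩ w hw hroot
    have hk := key w hroot
    have hsq : (2 * α * w + β) ^ 2 = σ ^ 2 := by
      rw [hs']; linear_combination 4 * α * hroot
    have hwe : w = ((2 * α * w + β) - β) / (2 * α) := by field_simp; ring
    rcases sq_eq_sq_iff_eq_or_eq_neg.mp hsq with h | h
    · rw [h] at hk hwe
      rcases h1 with h1 | h1
      · linarith
      · rw [← hk] at h1
        exact nonneg_of_mul_nonneg_right h1 hpos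
    · rw [h] at hk hwe
      rcases h2 with h2 | h2
      · linarith
      · have h2' : 0 ≤ cP a b c d e r s + cQ a b c d e r s * -σ := by linarith
        rw [← hk] at h2'
        exact nonneg_of_mul_nonneg_right h2' hpos
  · intro H
    constructor
    · by_cases hw : (σ - β) / (2 * α) ≤ 0
      · exact Or.inl hw
      · right
        have hr := w1 σ rfl
        have := H _ (not_le.mp hw) hr
        have hk := key _ hr
        rw [w2] at hk
        rw [← hk]
        positivity
    · by_cases hw : (-σ - β) / (2 * α) ≤ 0
      · exact Or.inl hw
      · right
        have hr := w1 (-σ) (by ring)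
        have := H _ (not_le.mp hw) hr
        have hk := key _ hr
        rw [w2] at hk
        have e : cP a b c d e r s - cQ a b c d e r s * σ
          = cP a b c d e r s + cQ a b c d e r s * -σ := by ring
        rw [e, ← hk]
        positivity

lemma Zf_bounds (n : ℕ) (hn : 2 ≤ n) (a b : ℝ) (r s : ℕ) (h : (r, s) ∈ Zf n a b) :
    1 ≤ r ∧ 1 ≤ s ∧ r + s ≤ n := by
  rcases h with ⟨k, h1, h2, h | h⟩ | ⟨_, _, k, h1, h2, h⟩ <;>
    simp only [Prod.mk.injEq] at h <;> omega

lemma twoVal_symm (a b c d e : ℝ) (r s : ℕ) (t u : ℝ) :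
    twoVal a b c d e r s t u = twoVal a b c d e s r u t := by
  unfold twoVal cA cB cC cD cE; ring

lemma twoVal_scale (a b c d e : ℝ) (r s : ℕ) (t u : ℝ) (hu : u ≠ 0) :
    twoVal a b c d e r s t u = u ^ 4 * twoVal a b c d e r s (t / u) 1 := by
  unfold twoVal
  field_simp

/-- one orientation -/
lemma twoVal_nonneg_aux (a b c d e : ℝ) (r s : ℕ) (t u : ℝ) (ht : 0 < t) (hu : 0 < u)
    (hst : 0 ≤ cΔ a b c d r s → cα a b c d r ≠ 0 → starCond a b c d e r s)
    (hα : cα a b c d r ≠ 0)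
    (hroot : cα a b c d r * t ^ 2 + cβ a b d r s * t * u + cγ a b c d s * u ^ 2 = 0) :
    0 ≤ twoVal a b c d e r s t u := by
  have hr : cα a b c d r * (t / u) ^ 2 + cβ a b d r s * (t / u) + cγ a b c d s = 0 := by
    field_simp; linear_combination hroot
  have hΔ : 0 ≤ cΔ a b c d r s := by
    have : cΔ a b c d r s = (2 * cα a b c d r * (t / u) + cβ a b d r s) ^ 2 := by
      unfold cΔ; linear_combination -4 * cα a b c d r * hr
    rw [this]; positivity
  rw [twoVal_scale _ _ _ _ _ _ _ _ _ hu.ne']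
  have := (starCond_iff a b c d e r s hΔ hα).mp (hst hΔ hα) (t / u) (by positivity) hr
  positivity

lemma twoVal_degenerate (a b c d e : ℝ) (r s : ℕ) (t u : ℝ)
    (hα : cα a b c d r = 0) (hβ : cβ a b d r s = 0) (hγ : cγ a b c d s = 0) :
    (r : ℝ) ^ 4 * twoVal a b c d e r s t u = cA a b c d e r * (r * t + s * u) ^ 4 := by
  have h1 : (r : ℝ) * cB b d e r s = 4 * s * cA a b c d e r := by
    unfold cα at hα
    unfold cA cB; linear_combination (-(r : ℝ) * s) * hα
  have h2 : 2 * (r : ℝ) * cC c d e r s = 3 * s * cB b d e r s := by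
    unfold cα at hα
    unfold cβ at hβ
    unfold cC cB; linear_combination (-(r : ℝ) * s) * hβ + (r : ℝ) * s * hα
  have h3 : 3 * (r : ℝ) * cD b d e r s = 2 * s * cC c d e r s := by
    unfold cγ at hγ
    unfold cβ at hβ
    unfold cC cD; linear_combination (-(r : ℝ) * s) * hγ + (r : ℝ) * s * hβ
  have h4 : 4 * (r : ℝ) * cE a b c d e s = s * cD b d e r s := by
    unfold cγ at hγ
    unfold cD cE; linear_combination (r : ℝ) * s * hγ
  unfold twoVal
  generalize cA a b c d e r = A at *
  generalize cB b d e r s = B at *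
  generalize cC c d e r s = C at *
  generalize cD b d e r s = D at *
  generalize cE a b c d e s = E at *
  generalize (r : ℝ) = r at *
  generalize (s : ℝ) = s at *
  have g2 : r ^ 2 * C = 6 * s ^ 2 * A := by linear_combination r / 2 * h2 + 3 / 2 * s * h1
  have g3 : r ^ 3 * D = 4 * s ^ 3 * A := by linear_combination r ^ 2 / 3 * h3 + 2 / 3 * s * g2
  have g4 : r ^ 4 * E = s ^ 4 * A := by linear_combination r ^ 3 / 4 * h4 + 1 / 4 * s * g3
  linear_combination r ^ 3 * t ^ 3 * u * h1 + r ^ 2 * t ^ 2 * u ^ 2 * g2 + r * t * u ^ 3 * g3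
    + u ^ 4 * g4

lemma twoVal_nonneg (a b c d e : ℝ) (r s : ℕ) (hr : 1 ≤ r) (t u : ℝ) (ht : 0 < t) (hu : 0 < u)
    (hA : 0 ≤ cA a b c d e r)
    (h1 : 0 ≤ cΔ a b c d r s → cα a b c d r ≠ 0 → starCond a b c d e r s)
    (h2 : 0 ≤ cΔ a b c d s r → cα a b c d s ≠ 0 → starCond a b c d e s r)
    (hroot : cα a b c d r * t ^ 2 + cβ a b d r s * t * u + cγ a b c d s * u ^ 2 = 0) :
    0 ≤ twoVal a b c d e r s t u := by
  by_cases hα : cα a b c d r = 0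
  · by_cases hγ : cα a b c d s = 0
    · have hγ' : cγ a b c d s = 0 := hγ
      have hβ : cβ a b d r s = 0 := by
        rw [hα, hγ'] at hroot
        have : cβ a b d r s * (t * u) = 0 := by linarith
        rcases mul_eq_zero.mp this with h | h
        · exact h
        · exact absurd h (by positivity)
      have h := twoVal_degenerate a b c d e r s t u hα hβ hγ'
      have hr' : (0 : ℝ) < (r : ℝ) ^ 4 := by positivity
      have h0 : 0 ≤ (r : ℝ) ^ 4 * twoVal a b c d e r s t u := by rw [h]; positivity
      exact nonneg_of_mul_nonneg_right h0 hr'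
    · rw [twoVal_symm]
      refine twoVal_nonneg_aux a b c d e s r u t hu ht h2 hγ ?_
      have e1 : cβ a b d s r = cβ a b d r s := by unfold cβ; ring
      have e2 : cγ a b c d r = cα a b c d r := rfl
      have e3 : cγ a b c d s = cα a b c d s := rfl
      rw [e3] at hroot
      rw [e1, e2]
      linarith
  · exact twoVal_nonneg_aux a b c d e r s t u ht hu h1 hα hroot

/-! ### Moving a triple with fixed sum and sum of squares -/

lemma exists_roots (S p : ℝ) (hS : 0 ≤ S) (hp : 0 ≤ p) (hD : 0 ≤ S ^ 2 - 4 * p) :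
    ∃ y z : ℝ, 0 ≤ y ∧ 0 ≤ z ∧ y + z = S ∧ y * z = p := by
  have hq := Real.sq_sqrt hD
  have h0 := Real.sqrt_nonneg (S ^ 2 - 4 * p)
  set q := √(S ^ 2 - 4 * p)
  have : q ≤ S := by
    apply le_of_sq_le_sq _ hS
    linarith
  refine ⟨(S + q) / 2, (S - q) / 2, by linarith, by linarith, by ring, ?_⟩
  linear_combination -1 / 4 * hq

lemma sum_update {n : ℕ} (x : Fin n → ℝ) (i : Fin n) (v : ℝ) (k : ℕ) :
    powSum n k (Function.update x i v) = powSum n k x + v ^ k - x i ^ k := by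
  unfold powSum
  rw [← Finset.add_sum_erase _ _ (mem_univ i), ← Finset.add_sum_erase univ (fun j => x j ^ k) (mem_univ i)]
  have : ∑ j ∈ univ.erase i, Function.update x i v j ^ k = ∑ j ∈ univ.erase i, x j ^ k := by
    apply Finset.sum_congr rfl
    intro j hj
    rw [Function.update_of_ne (Finset.ne_of_mem_erase hj)]
  rw [this]
  simp
  ring

/-- Minimizer on the simplex which among minimizers maximizes the third power sum. -/
def IsExtremal (n : ℕ) (a b c d e : ℝ) (x : Fin n → ℝ) : Prop :=
  (∀ i, 0 ≤ x i) ∧ powSum n 1 x = 1 ∧ ∀ y : Fin n → ℝ, (∀ i, 0 ≤ y i) → powSum n 1 y = 1 →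
    quarticF n a b c d e x ≤ quarticF n a b c d e y ∧
    (quarticF n a b c d e y = quarticF n a b c d e x → powSum n 3 y ≤ powSum n 3 x)

lemma continuous_powSum (n k : ℕ) : Continuous (powSum n k) := by
  unfold powSum; fun_prop

lemma continuous_quarticF (n : ℕ) (a b c d e : ℝ) : Continuous (quarticF n a b c d e) := by
  unfold quarticF
  have := continuous_powSum n
  have h1 := this 1
  have h2 := this 2
  have h3 := this 3
  have h4 := this 4
  fun_prop

lemma exists_ext (n : ℕ) (hn : 2 ≤ n) (a b c d e : ℝ) : ∃ x, IsExtremal n a b c d e x := by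
  have hK : IsCompact (stdSimplex ℝ (Fin n)) := isCompact_stdSimplex ℝ (Fin n)
  have hne : (stdSimplex ℝ (Fin n)).Nonempty := ⟨_, single_mem_stdSimplex ℝ (⟨0, by omega⟩ : Fin n)⟩
  obtain ⟨x0, hx0, hmin⟩ := hK.exists_isMinOn hne (continuous_quarticF n a b c d e).continuousOn
  have hK2 : IsCompact (stdSimplex ℝ (Fin n) ∩ {y | quarticF n a b c d e y = quarticF n a b c d e x0}) :=
    hK.inter_right (isClosed_eq (continuous_quarticF n a b c d e) continuous_const)
  obtain ⟨x, hx, hmax⟩ := hK2.exists_isMaxOn ⟨x0, hx0, rfl⟩ (continuous_powSum n 3).continuousOn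
  have hx2 : quarticF n a b c d e x = quarticF n a b c d e x0 := hx.2
  refine ⟨x, hx.1.1, by simpa [powSum] using hx.1.2, fun y hy hy1 => ?_⟩
  have hyK : y ∈ stdSimplex ℝ (Fin n) := ⟨hy, by simpa [powSum] using hy1⟩
  refine ⟨?_, fun h => ?_⟩
  · rw [hx2]; exact hmin hyK
  · exact hmax ⟨hyK, h.trans hx2⟩

lemma ext_move (n : ℕ) (a b c d e : ℝ) (x : Fin n → ℝ) (hx : IsExtremal n a b c d e x)
    (i j k : Fin n) (hij : i ≠ j) (hik : i ≠ k) (hjk : j ≠ k)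
    (hj : 0 < x j) (hk : 0 < x k) (hne : x j ≠ x k) :
    ∃ ε > 0, ∀ h : ℝ, |h| < ε → 0 ≤ x i + h →
      ∀ δ : ℝ, δ = h * (x i - x j) * (x i - x k) + h ^ 2 * (2 * x i - x j - x k) + h ^ 3 →
      0 ≤ (4 * a * (x i + x j + x k) + 3 * b) * δ ∧
      ((4 * a * (x i + x j + x k) + 3 * b) * δ = 0 → δ ≤ 0) := by
  obtain ⟨hx0, hx1, hxm⟩ := hx
  have ev : ∀ᶠ h : ℝ in nhds 0, 0 < x j + x k - h ∧
      0 < x j * x k - h * (x j + x k - x i) + h ^ 2 ∧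
      0 < (x j + x k - h) ^ 2 - 4 * (x j * x k - h * (x j + x k - x i) + h ^ 2) := by
    refine Filter.Eventually.and ?_ (Filter.Eventually.and ?_ ?_)
    · apply ContinuousAt.eventually_lt (by fun_prop) (by fun_prop)
      simp; linarith
    · apply ContinuousAt.eventually_lt (by fun_prop) (by fun_prop)
      simp; positivity
    · apply ContinuousAt.eventually_lt (by fun_prop) (by fun_prop)
      have : 0 < (x j - x k) ^ 2 := by
        have := sub_ne_zero.mpr hne
        positivity
      simp; nlinarith
  obtain ⟨ε, hε, hball⟩ := Metric.eventually_nhds_iff.mp ev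
  refine ⟨ε, hε, fun h hh hxi δ hδ => ?_⟩
  obtain ⟨q1, q2, q3⟩ := hball (y := h) (by simpa [Real.dist_eq] using hh)
  obtain ⟨y, z, hy, hz, hyz, hyzp⟩ := exists_roots _ _ q1.le q2.le q3.le
  set X := Function.update (Function.update (Function.update x i (x i + h)) j y) k z with hX
  have hp : ∀ m, powSum n m X = powSum n m x + ((x i + h) ^ m + y ^ m + z ^ m)
      - (x i ^ m + x j ^ m + x k ^ m) := by
    intro m
    rw [hX, sum_update, sum_update, sum_update]
    rw [Function.update_of_ne hjk.symm, Function.update_of_ne hik.symm, Function.update_of_ne hij.symm]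
    ring
  have hXn : ∀ l, 0 ≤ X l := by
    intro l
    rw [hX]
    simp only [Function.update_apply]
    split_ifs <;> first | assumption | exact hx0 l
  have e1 : powSum n 1 X = powSum n 1 x := by
    rw [hp]; linear_combination hyz
  have hz' : z = x j + x k - h - y := by linarith
  have e2 : powSum n 2 X = powSum n 2 x := by
    rw [hp]
    have : y ^ 2 + z ^ 2 = (y + z) ^ 2 - 2 * (y * z) := by ring
    rw [hyz, hyzp] at this
    linear_combination this
  have e3 : powSum n 3 X = powSum n 3 x + 3 * δ := by
    rw [hp, hδ]
    have : y ^ 3 + z ^ 3 = (y + z) ^ 3 - 3 * (y + z) * (y * z) := by ring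
    rw [hyz, hyzp] at this
    linear_combination this
  have e4 : powSum n 4 X = powSum n 4 x + 4 * (x i + x j + x k) * δ := by
    rw [hp, hδ]
    have : y ^ 4 + z ^ 4 = (y + z) ^ 4 - 4 * (y + z) ^ 2 * (y * z) + 2 * (y * z) ^ 2 := by ring
    rw [hyz, hyzp] at this
    linear_combination this
  have ef : quarticF n a b c d e X = quarticF n a b c d e x
      + (4 * a * (x i + x j + x k) + 3 * b) * δ := by
    unfold quarticF
    rw [e1, e2, e3, e4, hx1]; ring
  obtain ⟨m1, m2⟩ := hxm X hXn (e1.trans hx1)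
  rw [ef] at m1 m2
  refine ⟨by linarith, fun h0 => ?_⟩
  have := m2 (by rw [h0, add_zero])
  rw [e3] at this
  linarith

/-- Three distinct positive values do not occur. -/
lemma ext_three (n : ℕ) (a b c d e : ℝ) (x : Fin n → ℝ) (hx : IsExtremal n a b c d e x)
    (i j k : Fin n) (hi : 0 < x i) (hj : 0 < x j) (hk : 0 < x k)
    (hij : x i ≠ x j) (hik : x i ≠ x k) (hjk : x j ≠ x k) : False := by
  obtain ⟨ε, hε, H⟩ := ext_move n a b c d e x hx i j k (fun h => hij (by rw [h]))
    (fun h => hik (by rw [h])) (fun h => hjk (by rw [h])) hj hk hjk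
  set M := 4 * a * (x i + x j + x k) + 3 * b
  set κ := (x i - x j) * (x i - x k) with hκ
  have hκ0 : κ ≠ 0 := mul_ne_zero (sub_ne_zero.mpr hij) (sub_ne_zero.mpr hik)
  have hκ2 : 0 < κ ^ 2 := by positivity
  -- move with `h = τ κ`
  have ev : ∀ᶠ τ : ℝ in nhds 0, |τ * κ| < ε ∧ 0 < x i + τ * κ ∧
      0 < κ ^ 2 + τ * κ ^ 2 * (2 * x i - x j - x k) + τ ^ 2 * κ ^ 3 := by
    refine Filter.Eventually.and ?_ (Filter.Eventually.and ?_ ?_)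
    · apply ContinuousAt.eventually_lt (by fun_prop) (by fun_prop)
      simpa using hε
    · apply ContinuousAt.eventually_lt (by fun_prop) (by fun_prop)
      simpa using hi
    · apply ContinuousAt.eventually_lt (by fun_prop) (by fun_prop)
      have h0 : (0 : ℝ) < κ ^ 2 + 0 * κ ^ 2 * (2 * x i - x j - x k) + 0 ^ 2 * κ ^ 3 := by linarith
      exact h0
  obtain ⟨η, hη, hball⟩ := Metric.eventually_nhds_iff.mp ev
  have P := fun τ (hτ : |τ| < η) => hball (y := τ) (by simpa [Real.dist_eq] using hτ)
  have hp : |η / 2| < η := by rw [abs_of_pos (by linarith)]; linarith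
  have hm : |-(η / 2)| < η := by rwa [abs_neg]
  obtain ⟨a1, a2, a3⟩ := P _ hp
  obtain ⟨b1, b2, b3⟩ := P _ hm
  obtain ⟨A1, A2⟩ := H _ a1 a2.le (η / 2 * (κ ^ 2 + (η / 2) * κ ^ 2 * (2 * x i - x j - x k) + (η / 2) ^ 2 * κ ^ 3))
    (by rw [hκ]; ring)
  obtain ⟨B1, B2⟩ := H _ b1 b2.le (-(η / 2) * (κ ^ 2 + -(η / 2) * κ ^ 2 * (2 * x i - x j - x k) + (-(η / 2)) ^ 2 * κ ^ 3))
    (by rw [hκ]; ring)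
  have pa := mul_pos (half_pos hη) a3
  have pb := mul_pos (half_pos hη) b3
  have M1 : 0 ≤ M := by
    by_contra hc
    exact absurd A1 (not_le.mpr (mul_neg_of_neg_of_pos (not_le.mp hc) pa))
  have M2 : M ≤ 0 := by
    by_contra hc
    have := mul_pos (not_le.mp hc) pb
    linarith
  have M0 : M = 0 := le_antisymm M2 M1
  have := A2 (by rw [M0, zero_mul])
  linarith

/-- Two copies of `t`, one copy of `u`. -/
lemma ext_double (n : ℕ) (a b c d e : ℝ) (x : Fin n → ℝ) (hx : IsExtremal n a b c d e x)
    (i j k : Fin n) (t u : ℝ) (hi : x i = t) (hj : x j = t) (hk : x k = u) (hij : i ≠ j)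
    (ht : 0 < t) (hu : 0 < u) (htu : t ≠ u) :
    (u < t → 0 < 4 * a * (2 * t + u) + 3 * b) ∧ (t < u → 4 * a * (2 * t + u) + 3 * b ≤ 0) := by
  have hik : i ≠ k := fun h => htu (by rw [← hi, ← hk, h])
  have hjk : j ≠ k := fun h => htu (by rw [← hj, ← hk, h])
  obtain ⟨ε, hε, H⟩ := ext_move n a b c d e x hx i j k hij hik hjk (by rwa [hj]) (by rwa [hk])
    (by rwa [hj, hk])
  rw [hi, hj, hk] at H
  have eM : t + t + u = 2 * t + u := by ring
  rw [eM] at H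
  generalize 4 * a * (2 * t + u) + 3 * b = M at *
  constructor
  · intro hlt
    have hε2 : |ε / 2| < ε := by rw [abs_of_pos (by linarith)]; linarith
    obtain ⟨A1, A2⟩ := H (ε / 2) hε2 (by linarith) ((ε / 2) ^ 2 * (t - u + ε / 2)) (by ring)
    have pos : 0 < (ε / 2) ^ 2 * (t - u + ε / 2) := by
      have : 0 < t - u + ε / 2 := by linarith
      positivity
    by_contra hc
    rcases (not_lt.mp hc).lt_or_eq with h | h
    · exact absurd A1 (not_le.mpr (mul_neg_of_neg_of_pos h pos))
    · have := A2 (by rw [h, zero_mul])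
      linarith
  · intro hlt
    set h := min (ε / 2) ((u - t) / 2) with hh
    have h0 : 0 < h := lt_min (by linarith) (by linarith)
    have h1 : h ≤ ε / 2 := min_le_left _ _
    have h2 : h ≤ (u - t) / 2 := min_le_right _ _
    obtain ⟨A1, A2⟩ := H h (by rw [abs_of_pos h0]; linarith) (by linarith) (h ^ 2 * (t - u + h)) (by ring)
    have neg : h ^ 2 * (t - u + h) < 0 := mul_neg_of_pos_of_neg (by positivity) (by linarith)
    by_contra hc
    exact absurd A1 (not_le.mpr (mul_neg_of_pos_of_neg (not_le.mp hc) neg))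

lemma ext_zero (n : ℕ) (a b c d e : ℝ) (x : Fin n → ℝ) (hx : IsExtremal n a b c d e x)
    (i j k : Fin n) (t u : ℝ) (hi : x i = 0) (hj : x j = t) (hk : x k = u)
    (ht : 0 < t) (hu : 0 < u) (htu : u < t) : 0 < 4 * a * (t + u) + 3 * b := by
  have hij : i ≠ j := fun h => ht.ne' (by rw [← hi, ← hj, h])
  have hik : i ≠ k := fun h => hu.ne' (by rw [← hi, ← hk, h])
  have hjk : j ≠ k := fun h => htu.ne' (by rw [← hj, ← hk, h])
  obtain ⟨ε, hε, H⟩ := ext_move n a b c d e x hx i j k hij hik hjk (by rwa [hj]) (by rwa [hk])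
    (by rw [hj, hk]; exact htu.ne')
  rw [hi, hj, hk] at H
  rw [zero_add] at H
  generalize 4 * a * (t + u) + 3 * b = M at *
  set h := min (ε / 2) (u / 2) with hh
  have h0 : 0 < h := lt_min (by linarith) (by linarith)
  have h1 : h ≤ ε / 2 := min_le_left _ _
  have h2 : h ≤ u / 2 := min_le_right _ _
  obtain ⟨A1, A2⟩ := H h (by rw [abs_of_pos h0]; linarith) (by linarith) (h * ((t - h) * (u - h))) (by ring)
  have pos : 0 < h * ((t - h) * (u - h)) := mul_pos h0 (mul_pos (by linarith) (by linarith))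
  by_contra hc
  rcases (not_lt.mp hc).lt_or_eq with h | h
  · exact absurd A1 (not_le.mpr (mul_neg_of_neg_of_pos h pos))
  · have := A2 (by rw [h, zero_mul])
    linarith

/-- First-order condition. -/
lemma ext_crit (n : ℕ) (a b c d e : ℝ) (x : Fin n → ℝ) (hx : IsExtremal n a b c d e x)
    (i j : Fin n) (t u : ℝ) (hi : x i = t) (hj : x j = u)
    (ht : 0 < t) (hu : 0 < u) (htu : t ≠ u) :
    4 * a * (t ^ 2 + t * u + u ^ 2) + 3 * b * (t + u) + 4 * c * powSum n 2 x + 2 * d = 0 := by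
  have hij : i ≠ j := fun h => htu (by rw [← hi, ← hj, h])
  obtain ⟨hx0, hx1, hxm⟩ := hx
  set p2 := powSum n 2 x with hp2
  set p3 := powSum n 3 x with hp3
  set p4 := powSum n 4 x with hp4
  let φ : ℝ → ℝ := fun h => a * (p4 + ((t + h) ^ 4 + (u - h) ^ 4 - t ^ 4 - u ^ 4))
    + b * (p3 + ((t + h) ^ 3 + (u - h) ^ 3 - t ^ 3 - u ^ 3))
    + c * (p2 + ((t + h) ^ 2 + (u - h) ^ 2 - t ^ 2 - u ^ 2)) ^ 2
    + d * (p2 + ((t + h) ^ 2 + (u - h) ^ 2 - t ^ 2 - u ^ 2)) + e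
  have hmin : IsLocalMin φ 0 := by
    refine Metric.eventually_nhds_iff.mpr ⟨min t u, lt_min ht hu, fun h hh => ?_⟩
    rw [Real.dist_eq, sub_zero, lt_min_iff, abs_lt, abs_lt] at hh
    obtain ⟨⟨g1, g2⟩, g3, g4⟩ := hh
    set X := Function.update (Function.update x i (t + h)) j (u - h) with hX
    have hp : ∀ m, powSum n m X = powSum n m x + ((t + h) ^ m + (u - h) ^ m - t ^ m - u ^ m) := by
      intro m
      rw [hX, sum_update, sum_update]
      rw [Function.update_of_ne hij.symm, hi, hj]
      ring
    have hXn : ∀ l, 0 ≤ X l := by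
      intro l
      rw [hX]
      simp only [Function.update_apply]
      split_ifs
      · linarith
      · linarith
      · exact hx0 l
    have e1 : powSum n 1 X = 1 := by rw [hp, hx1]; ring
    have := (hxm X hXn e1).1
    have f1 : quarticF n a b c d e X = φ h := by
      unfold quarticF
      rw [e1, hp, hp, hp]
      simp only [φ, hp2, hp3, hp4]; ring
    have f0 : quarticF n a b c d e x = φ 0 := by
      unfold quarticF
      rw [hx1]
      simp only [φ, hp2, hp3, hp4]; ring
    rw [f1, f0] at this
    exact this
  have hid : HasDerivAt (fun h : ℝ => h) 1 0 := hasDerivAt_id 0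
  have l1 : HasDerivAt (fun h : ℝ => t + h) 1 0 := hid.const_add t
  have l2 : HasDerivAt (fun h : ℝ => u - h) (-1) 0 := hid.const_sub u
  have q : ∀ m : ℕ, HasDerivAt (fun h : ℝ => (t + h) ^ m + (u - h) ^ m - t ^ m - u ^ m)
      (m * (t + 0) ^ (m - 1) * 1 + m * (u - 0) ^ (m - 1) * (-1)) 0 :=
    fun m => (((l1.pow m).add (l2.pow m)).sub_const _).sub_const _
  have hder := ((((((q 4).const_add p4).const_mul a).add (((q 3).const_add p3).const_mul b)).add
    ((((q 2).const_add p2).pow 2).const_mul c)).add (((q 2).const_add p2).const_mul d)).add_const e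
  have h0 := hmin.hasDerivAt_eq_zero hder
  norm_num at h0
  have : (t - u) * (4 * a * (t ^ 2 + t * u + u ^ 2) + 3 * b * (t + u) + 4 * c * p2 + 2 * d) = 0 := by
    linear_combination h0
  rcases mul_eq_zero.mp this with h | h
  · exact absurd h (sub_ne_zero.mpr htu)
  · exact h

lemma two_filters (n : ℕ) (x : Fin n → ℝ) (t u : ℝ) (ht : t ≠ 0) (hu : u ≠ 0) (htu : t ≠ u)
    (hv : ∀ l, x l = 0 ∨ x l = t ∨ x l = u) (k : ℕ) (hk : 1 ≤ k) :
    powSum n k x = ((univ.filter (fun l => x l = t)).card : ℝ) * t ^ k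
      + ((univ.filter (fun l => x l = u)).card : ℝ) * u ^ k := by
  unfold powSum
  have : ∀ l, x l ^ k = (if x l = t then t ^ k else 0) + (if x l = u then u ^ k else 0) := by
    intro l
    have hk0 : k ≠ 0 := by omega
    rcases hv l with h | h | h
    · simp [h, ht.symm, hu.symm, hk0]
    · simp [h, htu]
    · simp [h, htu.symm]
  rw [Finset.sum_congr rfl (fun l _ => this l), Finset.sum_add_distrib, ← Finset.sum_filter,
    ← Finset.sum_filter, Finset.sum_const, Finset.sum_const, nsmul_eq_mul, nsmul_eq_mul]

lemma ext_nonneg_two (n : ℕ) (a b c d e : ℝ) (x : Fin n → ℝ)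
    (hx : IsExtremal n a b c d e x)
    (h1 : ∀ k : ℕ, 1 ≤ k → k ≤ n → quarticF n a b c d e (onesPt n k) ≥ 0)
    (h2 : ∀ r s : ℕ, (r, s) ∈ Zf n a b → 0 ≤ cΔ a b c d r s → cα a b c d r ≠ 0 →
       starCond a b c d e r s)
    (i j : Fin n) (hj : 0 < x j) (hij : x j < x i) : 0 ≤ quarticF n a b c d e x := by
  obtain ⟨t, ht⟩ : ∃ t, t = x i := ⟨_, rfl⟩
  obtain ⟨u, hu⟩ : ∃ u, u = x j := ⟨_, rfl⟩
  rw [← ht, ← hu] at hij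
  rw [← hu] at hj
  have ht0 : 0 < t := hj.trans hij
  have hv : ∀ l, x l = 0 ∨ x l = t ∨ x l = u := by
    intro l
    by_contra hc
    push Not at hc
    obtain ⟨c0, c1, c2⟩ := hc
    have : 0 < x l := lt_of_le_of_ne (hx.1 l) c0.symm
    exact ext_three n a b c d e x hx l i j this (by rwa [← ht]) (by rwa [← hu])
      (by rwa [← ht]) (by rwa [← hu]) (by rw [← ht, ← hu]; exact hij.ne')
  have hps := two_filters n x t u ht0.ne' hj.ne' hij.ne' hv
  have hr : 1 ≤ (univ.filter (fun l => x l = t)).card :=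
    Finset.card_pos.mpr ⟨i, by simp [ht]⟩
  have hs : 1 ≤ (univ.filter (fun l => x l = u)).card :=
    Finset.card_pos.mpr ⟨j, by simp [hu]⟩
  have hdisj : Disjoint (univ.filter (fun l => x l = t)) (univ.filter (fun l => x l = u)) := by
    rw [Finset.disjoint_left]
    intro l hl hl'
    simp at hl hl'
    exact hij.ne' (hl.symm.trans hl')
  have hcard := Finset.card_union_of_disjoint hdisj
  have hle : (univ.filter (fun l => x l = t)).card + (univ.filter (fun l => x l = u)).card ≤ n := by
    rw [← hcard]
    simpa using Finset.card_le_univ (univ.filter (fun l => x l = t) ∪ univ.filter (fun l => x l = u))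
  have big : 2 ≤ (univ.filter (fun l => x l = t)).card → 2 ≤ (univ.filter (fun l => x l = u)).card →
      a > 0 ∧ b < 0 ∧
        (univ.filter (fun l => x l = t)).card + (univ.filter (fun l => x l = u)).card = n := by
    intro r2 s2
    obtain ⟨i1, m1, i2, m2, n1⟩ := Finset.one_lt_card.mp r2
    obtain ⟨j1, m3, j2, m4, n2⟩ := Finset.one_lt_card.mp s2
    simp at m1 m2 m3 m4
    have g1 := (ext_double n a b c d e x hx i1 i2 j t u m1 m2 hu.symm n1 ht0 hj hij.ne').1 hij
    have g2 := (ext_double n a b c d e x hx j1 j2 i u t m3 m4 ht.symm n2 hj ht0 hij.ne).2 hij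
    have ha : 0 < a := by
      by_contra hc
      have := mul_nonneg (neg_nonneg.mpr (not_lt.mp hc)) (sub_nonneg.mpr hij.le)
      nlinarith
    have hb : b < 0 := by
      have := mul_pos ha (by linarith : 0 < 2 * u + t)
      linarith
    refine ⟨ha, hb, ?_⟩
    by_contra hc
    have hlt : (univ.filter (fun l => x l = t) ∪ univ.filter (fun l => x l = u)).card
        < (univ : Finset (Fin n)).card := by
      rw [hcard]; simp; omega
    obtain ⟨l, _, hl⟩ := Finset.exists_mem_notMem_of_card_lt_card hlt
    simp at hl
    have hl0 : x l = 0 := by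
      rcases hv l with h | h | h
      · exact h
      · exact absurd h hl.1
      · exact absurd h hl.2
    have g3 := ext_zero n a b c d e x hx l i j t u hl0 ht.symm hu.symm ht0 hj hij
    have := mul_pos ha hj
    nlinarith
  have hcrit := ext_crit n a b c d e x hx i j t u ht.symm hu.symm ht0 hj hij.ne'
  have hp1 := hx.2.1
  rw [hps 1 le_rfl] at hp1
  rw [hps 2 (by norm_num)] at hcrit
  rw [quarticF_of_powSums n a b c d e x _ _ t u hps]
  generalize (univ.filter (fun l => x l = t)).card = r at *
  generalize (univ.filter (fun l => x l = u)).card = s at *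
  have hZ : (r, s) ∈ Zf n a b ∧ (s, r) ∈ Zf n a b := by
    by_cases r1 : r = 1
    · subst r1
      exact ⟨Or.inl ⟨s, hs, by omega, Or.inr rfl⟩, Or.inl ⟨s, hs, by omega, Or.inl rfl⟩⟩
    by_cases s1 : s = 1
    · subst s1
      exact ⟨Or.inl ⟨r, hr, by omega, Or.inl rfl⟩, Or.inl ⟨r, hr, by omega, Or.inr rfl⟩⟩
    obtain ⟨ha, hb, hn⟩ := big (by omega) (by omega)
    refine ⟨Or.inr ⟨ha, hb, r, hr, by omega, ?_⟩, Or.inr ⟨ha, hb, s, hs, by omega, ?_⟩⟩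
    · rw [Prod.mk.injEq]; omega
    · rw [Prod.mk.injEq]; omega
  refine twoVal_nonneg a b c d e r s hr t u ht0 hj ?_ (h2 r s hZ.1) (h2 s r hZ.2) ?_
  · have := h1 r hr (by omega)
    rwa [quarticF_onesPt n r (by omega)] at this
  · unfold cα cβ cγ
    linear_combination hcrit + (3 * b * (t + u) + 2 * d * (r * t + s * u + 1)) * hp1

lemma ext_nonneg (n : ℕ) (a b c d e : ℝ) (x : Fin n → ℝ)
    (hx : IsExtremal n a b c d e x)
    (h1 : ∀ k : ℕ, 1 ≤ k → k ≤ n → quarticF n a b c d e (onesPt n k) ≥ 0)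
    (h2 : ∀ r s : ℕ, (r, s) ∈ Zf n a b → 0 ≤ cΔ a b c d r s → cα a b c d r ≠ 0 →
       starCond a b c d e r s) : 0 ≤ quarticF n a b c d e x := by
  obtain ⟨i, hi⟩ : ∃ i, 0 < x i := by
    by_contra hc
    push Not at hc
    have h0 : ∀ i, x i = 0 := fun i => le_antisymm (hc i) (hx.1 i)
    have := hx.2.1
    simp [powSum, h0] at this
  by_cases hall : ∀ l, x l = 0 ∨ x l = x i
  · have hps : ∀ k, 1 ≤ k → powSum n k x
        = ((univ.filter (fun l => x l = x i)).card : ℝ) * x i ^ k + ((0 : ℕ) : ℝ) * 0 ^ k := by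
      intro k hk
      have hk0 : k ≠ 0 := by omega
      unfold powSum
      have : ∀ l, x l ^ k = if x l = x i then x i ^ k else 0 := by
        intro l
        rcases hall l with h | h
        · simp [h, hi.ne, hk0]
        · simp [h]
      rw [Finset.sum_congr rfl (fun l _ => this l), ← Finset.sum_filter, Finset.sum_const,
        nsmul_eq_mul]
      simp
    rw [quarticF_of_powSums n a b c d e x _ 0 (x i) 0 hps]
    have hr : 1 ≤ (univ.filter (fun l => x l = x i)).card := Finset.card_pos.mpr ⟨i, by simp⟩
    have hrn : (univ.filter (fun l => x l = x i)).card ≤ n := by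
      simpa using Finset.card_le_univ (univ.filter (fun l => x l = x i))
    have hA := h1 _ hr hrn
    rw [quarticF_onesPt n _ hrn] at hA
    have : twoVal a b c d e (univ.filter (fun l => x l = x i)).card 0 (x i) 0
      = cA a b c d e (univ.filter (fun l => x l = x i)).card * x i ^ 4 := by
      simp [twoVal]
    rw [this]
    exact mul_nonneg hA (by positivity)
  · push Not at hall
    obtain ⟨j, hj0, hj⟩ := hall
    have hjp : 0 < x j := lt_of_le_of_ne (hx.1 j) hj0.symm
    rcases lt_or_gt_of_ne hj with h | h
    · exact ext_nonneg_two n a b c d e x hx h1 h2 i j hjp h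
    · exact ext_nonneg_two n a b c d e x hx h1 h2 j i hi h

lemma powSum_smul (n k : ℕ) (l : ℝ) (x : Fin n → ℝ) :
    powSum n k (fun i => l * x i) = l ^ k * powSum n k x := by
  unfold powSum
  rw [Finset.mul_sum]
  exact Finset.sum_congr rfl (fun i _ => mul_pow _ _ _)

/-- Explicit discriminants deciding nonnegativity of a symmetric quartic on the
nonnegative orthant (the `QE4₊` algorithm). -/
theorem quartic_orthant_discriminants (n : ℕ) (hn : 2 ≤ n) (a b c d e : ℝ) :
    (∀ x : Fin n → ℝ, (∀ i, 0 ≤ x i) → quarticF n a b c d e x ≥ 0) ↔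
    ((∀ k : ℕ, 1 ≤ k → k ≤ n → quarticF n a b c d e (onesPt n k) ≥ 0) ∧
     (∀ r s : ℕ, (r, s) ∈ Zf n a b → 0 ≤ cΔ a b c d r s → cα a b c d r ≠ 0 →
       starCond a b c d e r s)) := by
  constructor
  · intro H
    refine ⟨fun k _ _ => H _ fun i => ?_, fun r s hZ hΔ hα => ?_⟩
    · unfold onesPt
      split_ifs <;> norm_num
    · obtain ⟨hr, hs, hrs⟩ := Zf_bounds n hn a b r s hZ
      rw [starCond_iff a b c d e r s hΔ hα]
      intro w hw _
      rw [← quarticF_of_powSums n a b c d e _ r s w 1 (fun k hk => powSum_twoPt n r s hrs w 1 k hk)]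
      refine H _ fun i => ?_
      split_ifs <;> first | exact hw.le | norm_num
  · rintro ⟨h1, h2⟩ x hx
    obtain ⟨y, hy⟩ := exists_ext n hn a b c d e
    have hy0 := ext_nonneg n a b c d e y hy h1 h2
    have hp : 0 ≤ powSum n 1 x := Finset.sum_nonneg fun i _ => by simpa using hx i
    rcases hp.eq_or_lt with h | h
    · have hz : ∀ i, x i = 0 := by
        intro i
        have := (Finset.sum_eq_zero_iff_of_nonneg (s := univ) (f := fun i => x i ^ 1)
          (fun i _ => by simpa using hx i)).mp h.symm i (mem_univ i)
        simpa using this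
      simp [quarticF, powSum, hz]
    · set p := powSum n 1 x with hpdef
      have hm := (hy.2.2 (fun i => p⁻¹ * x i) (fun i => mul_nonneg (by positivity) (hx i))
        (by rw [powSum_smul, ← hpdef]; field_simp)).1
      have hs : quarticF n a b c d e (fun i => p⁻¹ * x i) = (p⁻¹) ^ 4 * quarticF n a b c d e x := by
        unfold quarticF
        simp only [powSum_smul]
        ring
      rw [hs] at hm
      exact nonneg_of_mul_nonneg_right (hy0.trans hm) (by positivity)
end

section
/- Let A, B, C, D, E be real numbers with A > 0 and let F(t) = At⁴ + Bt³ + Ct² + Dt + E. Define Δ = −108A²D² + 4AC(27BD − 8C²) − 9B²(3BD − C²), G = 768A³E − 64A²(3BD + 2C²) + 144AB²C − 27B⁴, H = 384A³E² − 8A²(24BDE + 16C²E − 9CD²) + A(144B²CE − 3B²D² − 40BC²D + 8C⁴) − B²(27B²E − 9BCD + 2C³), and K = 256A³E³ − 192A²BDE² − 128A²C²E² + 144A²CD²E − 27A²D⁴ + 144AB²CE² − 6AB²D²E − 80ABC²DE + 18ABCD³ + 16AC⁴E − 4AC³D² − 27B⁴E² + 18B³CDE − 4B³D³ − 4B²C³E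 + B²C²D². Then F(t) ≥ 0 for every t ∈ ℝ if and only if (K ≥ 0 and Δ < 0) or (G ≥ 0 and H ≥ 0 and K ≥ 0). -/
lemma quartic_exists_min (A B C D E : ℝ) (hA : 0 < A) :
    ∃ r : ℝ, ∀ t : ℝ, A * r ^ 4 + B * r ^ 3 + C * r ^ 2 + D * r + E ≤
      A * t ^ 4 + B * t ^ 3 + C * t ^ 2 + D * t + E := by
  set R : ℝ := 1 + (|B| + |C| + |D|) / A with hR
  have hS : 0 ≤ (|B| + |C| + |D|) / A := by positivity
  have hR1 : 1 ≤ R := by linarith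
  have hAR : A * R = A + (|B| + |C| + |D|) := by rw [hR]; field_simp
  obtain ⟨r, -, hr⟩ := (isCompact_Icc (a := -R) (b := R)).exists_isMinOn
    (f := fun t : ℝ => A * t ^ 4 + B * t ^ 3 + C * t ^ 2 + D * t + E)
    ⟨0, by constructor <;> linarith⟩ (by fun_prop)
  have hr' : ∀ t ∈ Set.Icc (-R) R, A * r ^ 4 + B * r ^ 3 + C * r ^ 2 + D * r + E ≤
      A * t ^ 4 + B * t ^ 3 + C * t ^ 2 + D * t + E := fun t ht => hr ht
  refine ⟨r, fun t => ?_⟩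
  by_cases ht : |t| ≤ R
  · exact hr' t (abs_le.mp ht)
  · push Not at ht
    have h0 := hr' 0 ⟨by linarith, by linarith⟩
    have hx1 : 1 ≤ |t| := by linarith
    have e4 : t ^ 4 = |t| ^ 4 := by
      have := sq_abs t
      calc t ^ 4 = (t ^ 2) ^ 2 := by ring
        _ = (|t| ^ 2) ^ 2 := by rw [this]
        _ = |t| ^ 4 := by ring
    have b3 : -(|B| * |t| ^ 3) ≤ B * t ^ 3 := by
      have := neg_abs_le (B * t ^ 3); rwa [abs_mul, abs_pow] at this
    have b2 : -(|C| * |t| ^ 2) ≤ C * t ^ 2 := by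
      have := neg_abs_le (C * t ^ 2); rwa [abs_mul, abs_pow] at this
    have b1 : -(|D| * |t|) ≤ D * t := by
      have := neg_abs_le (D * t); rwa [abs_mul] at this
    have c2 : |C| * |t| ^ 2 ≤ |C| * |t| ^ 3 :=
      mul_le_mul_of_nonneg_left (pow_le_pow_right₀ hx1 (by norm_num)) (abs_nonneg _)
    have c1 : |D| * |t| ≤ |D| * |t| ^ 3 :=
      mul_le_mul_of_nonneg_left (le_self_pow₀ hx1 (by norm_num)) (abs_nonneg _)
    have h4 : (A + (|B| + |C| + |D|)) * |t| ^ 3 ≤ A * t ^ 4 := by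
      rw [← hAR, e4]
      have : R * |t| ^ 3 ≤ |t| * |t| ^ 3 :=
        mul_le_mul_of_nonneg_right ht.le (by positivity)
      nlinarith
    have hp : 0 ≤ A * |t| ^ 3 := by positivity
    nlinarith

lemma quartic_crit (A B C D E r : ℝ)
    (h : ∀ t : ℝ, A * r ^ 4 + B * r ^ 3 + C * r ^ 2 + D * r + E ≤
      A * t ^ 4 + B * t ^ 3 + C * t ^ 2 + D * t + E) :
    4 * A * r ^ 3 + 3 * B * r ^ 2 + 2 * C * r + D = 0 := by
  have hd : HasDerivAt (fun t : ℝ => A * t ^ 4 + B * t ^ 3 + C * t ^ 2 + D * t + E)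
      (4 * A * r ^ 3 + 3 * B * r ^ 2 + 2 * C * r + D) r := by
    have := (((((hasDerivAt_pow 4 r).const_mul A).add ((hasDerivAt_pow 3 r).const_mul B)).add
      ((hasDerivAt_pow 2 r).const_mul C)).add ((hasDerivAt_id r).const_mul D)).add_const E
    refine HasDerivAt.congr_deriv (f' := _) this ?_
    norm_num
    ring
  exact IsLocalMin.hasDerivAt_eq_zero (Filter.Eventually.of_forall h) hd

lemma nonneg_of_esymm (a b c : ℝ) (h1 : 0 ≤ a + b + c) (h2 : 0 ≤ a * b + b * c + a * c)
    (h3 : 0 ≤ a * b * c) : 0 ≤ a := by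
  by_contra hn
  push Not at hn
  have e : a ^ 3 = (a + b + c) * a ^ 2 - (a * b + b * c + a * c) * a + a * b * c := by ring
  have n3 : a ^ 3 < 0 := by
    have : 0 < a ^ 2 := by nlinarith
    nlinarith
  have p1 : 0 ≤ (a + b + c) * a ^ 2 := by positivity
  have p2 : (a * b + b * c + a * c) * a ≤ 0 := mul_nonpos_of_nonneg_of_nonpos h2 hn.le
  linarith

set_option maxHeartbeats 2000000 in

/-- Discriminants for global nonnegativity of a quartic with positive leading
coefficient: `F ≥ 0` on `ℝ` iff `(K ≥ 0 and Δ < 0)` or `(G, H, K ≥ 0)`. -/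
theorem quartic_nonneg_iff_discriminants (A B C D E : ℝ) (hA : 0 < A)
    (Δ G H K : ℝ)
    (hΔ : Δ = -108 * A ^ 2 * D ^ 2 + 4 * A * C * (27 * B * D - 8 * C ^ 2)
      - 9 * B ^ 2 * (3 * B * D - C ^ 2))
    (hG : G = 768 * A ^ 3 * E - 64 * A ^ 2 * (3 * B * D + 2 * C ^ 2)
      + 144 * A * B ^ 2 * C - 27 * B ^ 4)
    (hH : H = 384 * A ^ 3 * E ^ 2
      - 8 * A ^ 2 * (24 * B * D * E + 16 * C ^ 2 * E - 9 * C * D ^ 2)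
      + A * (144 * B ^ 2 * C * E - 3 * B ^ 2 * D ^ 2 - 40 * B * C ^ 2 * D + 8 * C ^ 4)
      - B ^ 2 * (27 * B ^ 2 * E - 9 * B * C * D + 2 * C ^ 3))
    (hK : K = 256 * A ^ 3 * E ^ 3 - 192 * A ^ 2 * B * D * E ^ 2
      - 128 * A ^ 2 * C ^ 2 * E ^ 2 + 144 * A ^ 2 * C * D ^ 2 * E - 27 * A ^ 2 * D ^ 4
      + 144 * A * B ^ 2 * C * E ^ 2 - 6 * A * B ^ 2 * D ^ 2 * E
      - 80 * A * B * C ^ 2 * D * E + 18 * A * B * C * D ^ 3 + 16 * A * C ^ 4 * E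
      - 4 * A * C ^ 3 * D ^ 2 - 27 * B ^ 4 * E ^ 2 + 18 * B ^ 3 * C * D * E
      - 4 * B ^ 3 * D ^ 3 - 4 * B ^ 2 * C ^ 3 * E + B ^ 2 * C ^ 2 * D ^ 2) :
    (∀ t : ℝ, A * t ^ 4 + B * t ^ 3 + C * t ^ 2 + D * t + E ≥ 0) ↔
    ((0 ≤ K ∧ Δ < 0) ∨ (0 ≤ G ∧ 0 ≤ H ∧ 0 ≤ K)) := by

  obtain ⟨r, hr⟩ := quartic_exists_min A B C D E hA
  have hc := quartic_crit A B C D E r hr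
  have hiff : (∀ t : ℝ, A * t ^ 4 + B * t ^ 3 + C * t ^ 2 + D * t + E ≥ 0) ↔
      0 ≤ A * r ^ 4 + B * r ^ 3 + C * r ^ 2 + D * r + E :=
    ⟨fun h => h r, fun h t => le_trans h (hr t)⟩
  obtain ⟨p, hp⟩ : ∃ p, p = r + 3 * B / (4 * A) := ⟨_, rfl⟩
  obtain ⟨q, hq⟩ : ∃ q, q = p * r + C / (2 * A) := ⟨_, rfl⟩
  have hB : B = 4 * A * (p - r) / 3 := by rw [hp]; field_simp; ring
  have hC : C = 2 * A * (q - p * r) := by rw [hq]; field_simp; ring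
  have hD : D = -4 * A * q * r := by
    have : D = -(4 * A * r ^ 3 + 3 * B * r ^ 2 + 2 * C * r) := by linarith
    rw [this, hB, hC]; ring
  have hΔ' : Δ = 64 * A ^ 4 * (p ^ 2 - 4 * q) * (r ^ 2 + p * r + q) ^ 2 := by
    rw [hΔ, hB, hC, hD]; ring
  by_cases hpq : 0 ≤ p ^ 2 - 4 * q
  · -- all critical points are real
    have hΔ0 : ¬ Δ < 0 := by
      rw [hΔ', not_lt]; positivity
    have hs := Real.sq_sqrt hpq
    obtain ⟨w, hw⟩ : ∃ w, w = Real.sqrt (p ^ 2 - 4 * q) := ⟨_, rfl⟩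
    rw [← hw] at hs
    obtain ⟨s, hs'⟩ : ∃ s, s = (-p + w) / 2 := ⟨_, rfl⟩
    obtain ⟨u, hu'⟩ : ∃ u, u = (-p - w) / 2 := ⟨_, rfl⟩
    have hpsu : p = -(s + u) := by rw [hs', hu']; ring
    have hqsu : q = s * u := by rw [hs', hu']; linarith
    rw [hpsu] at hB hC
    rw [hqsu] at hC hD
    obtain ⟨f, hf⟩ : ∃ f : ℝ → ℝ, ∀ t, f t = A * t ^ 4 + B * t ^ 3 + C * t ^ 2 + D * t + E :=
      ⟨_, fun _ => rfl⟩
    have hG' : G = 256 * A ^ 3 * (f r + f s + f u) := by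
      rw [hG, hf, hf, hf, hB, hC, hD]; ring
    have hH' : H = 128 * A ^ 3 * (f r * f s + f s * f u + f r * f u) := by
      rw [hH, hf, hf, hf, hB, hC, hD]; ring
    have hK' : K = 256 * A ^ 3 * (f r * f s * f u) := by
      rw [hK, hf, hf, hf, hB, hC, hD]; ring
    have hA3 : 0 < A ^ 3 := by positivity
    rw [hiff]
    constructor
    · intro h
      have h1 : 0 ≤ f r := by rw [hf]; exact h
      have h2 : 0 ≤ f s := by rw [hf]; exact hiff.mpr h s
      have h3 : 0 ≤ f u := by rw [hf]; exact hiff.mpr h u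
      right
      rw [hG', hH', hK']
      refine ⟨by positivity, by positivity, by positivity⟩
    · rintro (⟨-, h⟩ | ⟨h1, h2, h3⟩)
      · exact absurd h hΔ0
      · rw [← hf]
        rw [hG'] at h1
        rw [hH'] at h2
        rw [hK'] at h3
        exact nonneg_of_esymm (f r) (f s) (f u)
          (nonneg_of_mul_nonneg_right h1 (by positivity))
          (nonneg_of_mul_nonneg_right h2 (by positivity))
          (nonneg_of_mul_nonneg_right h3 (by positivity))
  · -- one real critical point
    push Not at hpq
    have hm : 0 < r ^ 2 + p * r + q := by nlinarith [sq_nonneg (r + p / 2)]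
    have hΔ0 : Δ < 0 := by
      have : 0 < 64 * A ^ 4 * (r ^ 2 + p * r + q) ^ 2 := by positivity
      rw [hΔ']; nlinarith
    obtain ⟨α, hα⟩ : ∃ α, α = A * (p ^ 2 - 4 * q) * (p + 2 * r) / 3 := ⟨_, rfl⟩
    obtain ⟨β, hβ⟩ : ∃ β, β = -A * q * (p ^ 2 - q) + B * p * q - C * q + E := ⟨_, rfl⟩
    obtain ⟨v, hv⟩ : ∃ v, v = A * r ^ 4 + B * r ^ 3 + C * r ^ 2 + D * r + E := ⟨_, rfl⟩
    have hK' : K = 256 * A ^ 3 * (v * (β ^ 2 - α * β * p + α ^ 2 * q)) := by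
      rw [hK, hv, hβ, hα, hB, hC, hD]; ring
    have hN : β ^ 2 - α * β * p + α ^ 2 * q
        = (β - α * p / 2) ^ 2 + α ^ 2 * ((4 * q - p ^ 2) / 4) := by ring
    have hq4 : 0 < (4 * q - p ^ 2) / 4 := by linarith
    have hN0 : 0 ≤ β ^ 2 - α * β * p + α ^ 2 * q := by rw [hN]; positivity
    rw [hiff, ← hv]
    have key : 0 ≤ v ↔ 0 ≤ K := by
      constructor
      · intro h
        rw [hK']; positivity
      · intro h
        rw [hK'] at h
        have h' : 0 ≤ v * (β ^ 2 - α * β * p + α ^ 2 * q) :=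
          nonneg_of_mul_nonneg_right h (by positivity)
        rcases hN0.lt_or_eq with hlt | heq
        · exact nonneg_of_mul_nonneg_left h' hlt
        · have hα0 : α = 0 := by
            by_contra hne
            have : 0 < α ^ 2 * ((4 * q - p ^ 2) / 4) := by positivity
            nlinarith [sq_nonneg (β - α * p / 2)]
          have hβ0 : β = 0 := by
            rw [hα0] at heq
            have : β ^ 2 = 0 := by linarith
            exact pow_eq_zero_iff (two_ne_zero) |>.mp this
          have hpr : p = -2 * r := by
            have h3 : A * (p ^ 2 - 4 * q) * (p + 2 * r) = 0 := by linarith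
            have hne : A * (p ^ 2 - 4 * q) ≠ 0 := mul_ne_zero hA.ne' hpq.ne
            have := (mul_eq_zero.mp h3).resolve_left hne
            linarith
          have hE : E = A * q * (p ^ 2 - q) - B * p * q + C * q := by linarith
          have : v = A * (q - r ^ 2) ^ 2 := by
            rw [hv, hE, hB, hC, hD, hpr]; ring
          rw [this]; positivity
    rw [key]
    constructor
    · intro h; exact Or.inl ⟨h, hΔ0⟩
    · rintro (⟨h, -⟩ | ⟨-, -, h⟩) <;> exact h
end
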